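/- Let r be a real 4×4 matrix with nonnegative entries summing to 1, and set ρ = Σ_{i,j} r_{ij} Π_i⊗Π_j (first Bell projector on qubits A'B', second on A''B''). If ρ is separable across the partition A=(A',A''), B=(B',B''), then r belongs to the polytope 𝒫_s. -/

import Mathlib

open Matrix Complex
open scoped Kronecker ComplexOrder

noncomputable section
namespace Paper

abbrev Q2 := Fin 2 × Fin 2
abbrev M4 := Matrix Q2 Q2 ℂ
abbrev M16 := Matrix (Q2 × Q2) (Q2 × Q2) ℂ

/-- `1/√2` as a complex number. -/
def invSqrt2 : ℂ := ((Real.sqrt 2)⁻¹ : ℝ)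

/-- The four Bell states `|Φ₁⟩,…,|Φ₄⟩` as vectors in `ℂ²⊗ℂ²`
(product basis indexed by `Fin 2 × Fin 2`). -/
def bell : Fin 4 → Q2 → ℂ :=
  ![fun p => !![invSqrt2, 0; 0, invSqrt2] p.1 p.2,
    fun p => !![invSqrt2, 0; 0, -invSqrt2] p.1 p.2,
    fun p => !![0, invSqrt2; invSqrt2, 0] p.1 p.2,
    fun p => !![0, invSqrt2; -invSqrt2, 0] p.1 p.2]

/-- The Bell projectors `Π_i = |Φ_i⟩⟨Φ_i|`. -/
def BellProj (i : Fin 4) : M4 := vecMulVec (bell i) (star (bell i))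

/-- The Pauli matrices `σ_x, σ_y, σ_z`. -/
def pauli : Fin 3 → Matrix (Fin 2) (Fin 2) ℂ :=
  ![!![0, 1; 1, 0], !![0, -I; I, 0], !![1, 0; 0, -1]]

/-- Reindexing `((a',b'),(a'',b'')) ↦ ((a',a''),(b',b''))`. -/
def swapMid : (Q2 × Q2) ≃ (Q2 × Q2) where
  toFun p := ((p.1.1, p.2.1), (p.1.2, p.2.2))
  invFun p := ((p.1.1, p.2.1), (p.1.2, p.2.2))
  left_inv _ := rfl
  right_inv _ := rfl

/-- The rank-one matrix `x x†`. -/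
def pureMat {d : Type*} (x : d → ℂ) : Matrix d d ℂ := vecMulVec x (star x)

/-- Separability of a 16×16 four-qubit matrix (qubit order A',B',A'',B'')
across the partition A = (A',A''), B = (B',B''). -/
def SepAB (ρ : M16) : Prop :=
  ∃ (n : ℕ) (x y : Fin n → Q2 → ℂ),
    (Matrix.reindex swapMid swapMid ρ) = ∑ k, (pureMat (x k)) ⊗ₖ (pureMat (y k))


/-- The matrix `D₀ = (1/4)·I₄`. -/
def D0 : Matrix (Fin 4) (Fin 4) ℝ := (1 / 4 : ℝ) • 1

/-- The matrix `G₀` with entries `1/4` for `i,j ∈ {1,2}` and `0` otherwise. -/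
def G0 : Matrix (Fin 4) (Fin 4) ℝ :=
  !![1/4, 1/4, 0, 0; 1/4, 1/4, 0, 0; 0, 0, 0, 0; 0, 0, 0, 0]

/-- The polytope `𝒫_s`: the convex hull of all matrices obtained from `D₀` or `G₀`
by independently permuting rows and columns. -/
def Ps : Set (Matrix (Fin 4) (Fin 4) ℝ) :=
  convexHull ℝ
    {M | ∃ σ τ : Equiv.Perm (Fin 4),
      (M = fun i j => D0 (σ i) (τ j)) ∨ (M = fun i j => G0 (σ i) (τ j))}

abbrev M44 := Matrix (Fin 4) (Fin 4) ℝ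

def gens : Set M44 :=
    {M | ∃ σ τ : Equiv.Perm (Fin 4),
      (M = fun i j => D0 (σ i) (τ j)) ∨ (M = fun i j => G0 (σ i) (τ j))}

lemma Ps_eq : Ps = convexHull ℝ gens := rfl

def tot (N : M44) : ℝ := ∑ i, ∑ j, N i j
def rs (N : M44) (i : Fin 4) : ℝ := ∑ j, N i j
def cs (N : M44) (j : Fin 4) : ℝ := ∑ i, N i j

def InC (N : M44) : Prop := ∃ c : ℝ, 0 ≤ c ∧ ∃ z ∈ Ps, N = c • z

lemma D0_app (i j : Fin 4) : D0 i j = if i = j then 1/4 else 0 := by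
  simp [D0, Matrix.one_apply]

lemma G0_app (i j : Fin 4) :
    G0 i j = (if i = 0 ∨ i = 1 then (1/2:ℝ) else 0) * (if j = 0 ∨ j = 1 then 1/2 else 0) := by
  fin_cases i <;> fin_cases j <;> simp [G0] <;> norm_num

lemma Ps_ne : ∃ z, z ∈ Ps :=
  ⟨_, subset_convexHull ℝ _ ⟨1, 1, Or.inl rfl⟩⟩

lemma InC.zero : InC 0 := by
  obtain ⟨z, hz⟩ := Ps_ne
  exact ⟨0, le_rfl, z, hz, by simp⟩

lemma InC.smul {N : M44} (h : InC N) {a : ℝ} (ha : 0 ≤ a) : InC (a • N) := by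
  obtain ⟨c, hc, z, hz, rfl⟩ := h
  exact ⟨a * c, mul_nonneg ha hc, z, hz, by rw [smul_smul]⟩

lemma InC.add {N M : M44} (h : InC N) (h' : InC M) : InC (N + M) := by
  obtain ⟨c, hc, z, hz, rfl⟩ := h
  obtain ⟨d, hd, w, hw, rfl⟩ := h'
  rcases eq_or_lt_of_le (add_nonneg hc hd) with h0 | h0
  · have : c = 0 := by linarith
    have : d = 0 := by linarith
    subst_vars
    simpa using InC.zero
  · refine ⟨c + d, h0.le, (c/(c+d)) • z + (d/(c+d)) • w, ?_, ?_⟩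
    · exact (convex_convexHull ℝ _) hz hw (by positivity) (by positivity) (by field_simp)
    · rw [smul_add, smul_smul, smul_smul]
      congr 2 <;> field_simp

lemma InC.sum {ι : Type*} (s : Finset ι) (f : ι → M44) (h : ∀ i ∈ s, InC (f i)) :
    InC (∑ i ∈ s, f i) := by
  classical
  induction s using Finset.induction_on with
  | empty => simpa using InC.zero
  | insert a s ha ih =>
    rw [Finset.sum_insert ha]
    exact (h a (by simp)).add (ih fun i hi => h i (by simp [hi]))

lemma InC.of_gens {N : M44} (h : N ∈ gens) : InC N :=
  ⟨1, zero_le_one, N, subset_convexHull ℝ _ h, by simp⟩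

lemma InC.map (f : M44 →ₗ[ℝ] M44) (hf : ∀ g ∈ gens, f g ∈ gens) {N : M44} (h : InC N) :
    InC (f N) := by
  obtain ⟨c, hc, z, hz, rfl⟩ := h
  refine ⟨c, hc, f z, ?_, by simp⟩
  have : Ps ⊆ f ⁻¹' Ps := by
    refine convexHull_min (fun g hg => subset_convexHull ℝ _ (hf g hg)) ?_
    exact (convex_convexHull ℝ _).linear_preimage f
  exact this hz

/-- row and column permutation -/
def pm (σ τ : Equiv.Perm (Fin 4)) (N : M44) : M44 := fun i j => N (σ i) (τ j)

/-- partial transposition -/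
def pt (N : M44) : M44 := fun i j => tot N / 4 - rs N i / 2 - cs N j / 2 + N i j

def tr (N : M44) : M44 := fun i j => N j i

lemma InC.pm {N : M44} (σ τ : Equiv.Perm (Fin 4)) (h : InC N) : InC (pm σ τ N) := by
  refine InC.map ⟨⟨Paper.pm σ τ, fun _ _ => rfl⟩, fun _ _ => rfl⟩ ?_ h
  rintro g ⟨s, t, rfl | rfl⟩
  · exact ⟨σ.trans s, τ.trans t, Or.inl rfl⟩
  · exact ⟨σ.trans s, τ.trans t, Or.inr rfl⟩

lemma InC.tr {N : M44} (h : InC N) : InC (tr N) := by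
  refine InC.map ⟨⟨Paper.tr, fun _ _ => rfl⟩, fun _ _ => rfl⟩ ?_ h
  rintro g ⟨s, t, rfl | rfl⟩
  · refine ⟨t, s, Or.inl ?_⟩
    funext i j
    change D0 (s j) (t i) = _
    simp [D0_app, eq_comm]
  · refine ⟨t, s, Or.inr ?_⟩
    funext i j
    change G0 (s j) (t i) = _
    simp only [G0_app, mul_comm]

def flip4 : Equiv.Perm (Fin 4) := Equiv.addRight 2

lemma flip4_prop (i : Fin 4) : (flip4 i = 0 ∨ flip4 i = 1) ↔ ¬ (i = 0 ∨ i = 1) := by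
  revert i; decide

lemma sumD_row (a : Fin 4) (t : Equiv.Perm (Fin 4)) : ∑ j, D0 a (t j) = 1/4 := by
  rw [Equiv.sum_comp t (fun j => D0 a j)]
  simp [D0_app]

lemma sumD_col (a : Fin 4) (t : Equiv.Perm (Fin 4)) : ∑ j, D0 (t j) a = 1/4 := by
  rw [Equiv.sum_comp t (fun j => D0 j a)]
  simp [D0_app]

lemma sumI (t : Equiv.Perm (Fin 4)) :
    ∑ j, (if t j = 0 ∨ t j = 1 then (1/2:ℝ) else 0) = 1 := by
  rw [Equiv.sum_comp t (fun j => if j = 0 ∨ j = 1 then (1/2:ℝ) else 0)]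
  simp [Fin.sum_univ_four]
  norm_num

lemma InC.pt {N : M44} (h : InC N) : InC (pt N) := by
  refine InC.map ⟨⟨Paper.pt, fun x y => ?_⟩, fun c x => ?_⟩ ?_ h
  · funext i j
    simp only [Paper.pt, tot, rs, cs, Matrix.add_apply, Finset.sum_add_distrib]; ring
  · funext i j
    simp only [Paper.pt, tot, rs, cs, Matrix.smul_apply, smul_eq_mul, ← Finset.mul_sum,
      RingHom.id_apply]; ring
  rintro g ⟨s, t, rfl | rfl⟩
  · refine ⟨s, t, Or.inl ?_⟩
    funext i j
    change (∑ i, ∑ j, D0 (s i) (t j)) / 4 - (∑ j, D0 (s i) (t j)) / 2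
      - (∑ i, D0 (s i) (t j)) / 2 + D0 (s i) (t j) = _
    simp only [sumD_row, sumD_col]
    norm_num
  · refine ⟨s.trans flip4, t.trans flip4, Or.inr ?_⟩
    funext i j
    change (∑ i, ∑ j, G0 (s i) (t j)) / 4 - (∑ j, G0 (s i) (t j)) / 2
      - (∑ i, G0 (s i) (t j)) / 2 + G0 (s i) (t j) = G0 (flip4 (s i)) (flip4 (t j))
    simp only [G0_app, ← Finset.mul_sum, ← Finset.sum_mul, sumI, flip4_prop]
    by_cases h1 : s i = 0 ∨ s i = 1 <;> by_cases h2 : t j = 0 ∨ t j = 1 <;>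
      simp only [h1, h2, if_true, if_false, not_true, not_false_iff] <;> norm_num

lemma perm2 (a b : Fin 4) (h : a ≠ b) : ∃ s : Equiv.Perm (Fin 4), s 0 = a ∧ s 1 = b := by
  have hb : Equiv.swap 0 a b ≠ 0 := by
    intro e
    apply h
    have := congrArg (Equiv.swap 0 a) e
    rw [Equiv.swap_apply_self, Equiv.swap_apply_left] at this
    exact this.symm
  refine ⟨Equiv.swap 0 a * Equiv.swap 1 (Equiv.swap 0 a b), ?_, ?_⟩
  · rw [Equiv.Perm.mul_apply, Equiv.swap_apply_of_ne_of_ne (by decide) hb.symm,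
      Equiv.swap_apply_left]
  · rw [Equiv.Perm.mul_apply, Equiv.swap_apply_left, Equiv.swap_apply_self]

def rectM (a b c d : Fin 4) : M44 :=
  fun i j => (if i = a ∨ i = b then (1:ℝ) else 0) * (if j = c ∨ j = d then 1 else 0)

lemma rectM_app (a b c d i j : Fin 4) : rectM a b c d i j =
  (if i = a ∨ i = b then (1:ℝ) else 0) * (if j = c ∨ j = d then 1 else 0) := rfl

lemma InC.rect (a b c d : Fin 4) (hab : a ≠ b) (hcd : c ≠ d) : InC (rectM a b c d) := by
  have key : ∀ a b : Fin 4, a ≠ b → ∃ s : Equiv.Perm (Fin 4), ∀ i,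
      (s i = 0 ∨ s i = 1) ↔ (i = a ∨ i = b) := by
    intro a b h
    obtain ⟨s, h0, h1⟩ := perm2 a b h
    refine ⟨s.symm, fun i => ?_⟩
    rw [Equiv.symm_apply_eq, Equiv.symm_apply_eq, h0, h1]
  obtain ⟨s, hs⟩ := key a b hab
  obtain ⟨t, ht⟩ := key c d hcd
  have := (InC.of_gens ⟨s, t, Or.inr rfl⟩).smul (show (0:ℝ) ≤ 4 by norm_num)
  refine (congrArg InC ?_).mpr this
  funext i j
  change _ = 4 * G0 (s i) (t j)
  simp only [G0_app, hs, ht, rectM_app]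
  split_ifs <;> norm_num

lemma InC.perm (σ : Equiv.Perm (Fin 4)) : InC (σ.permMatrix ℝ) := by
  have := (InC.of_gens ⟨σ, 1, Or.inl rfl⟩).smul (show (0:ℝ) ≤ 4 by norm_num)
  convert this using 1
  funext i j
  change _ = 4 * D0 (σ i) j
  simp [D0_app, Equiv.Perm.permMatrix, PEquiv.toMatrix_apply, Equiv.toPEquiv_apply]

lemma InC.ds {M : M44} {h : ℝ} (h0 : ∀ i j, 0 ≤ M i j) (hr : ∀ i, ∑ j, M i j = h)
    (hc : ∀ j, ∑ i, M i j = h) : InC M := by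
  have hh : 0 ≤ h := by rw [← hr 0]; exact Finset.sum_nonneg fun j _ => h0 0 j
  rcases eq_or_lt_of_le hh with h1 | h1
  · have : M = 0 := by
      funext i j
      have := (Finset.sum_eq_zero_iff_of_nonneg (fun j _ => h0 i j)).1 ((hr i).trans h1.symm) j
        (Finset.mem_univ _)
      simpa using this
    rw [this]; exact InC.zero
  · have hm : h⁻¹ • M ∈ doublyStochastic ℝ (Fin 4) := by
      rw [mem_doublyStochastic_iff_sum]
      refine ⟨fun i j => ?_, fun i => ?_, fun j => ?_⟩
      · simp only [Matrix.smul_apply, smul_eq_mul]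
        exact mul_nonneg (by positivity) (h0 i j)
      · simp only [Matrix.smul_apply, smul_eq_mul, ← Finset.mul_sum, hr]
        field_simp
      · simp only [Matrix.smul_apply, smul_eq_mul, ← Finset.mul_sum, hc]
        field_simp
    rw [← SetLike.mem_coe, doublyStochastic_eq_convexHull_permMatrix] at hm
    have hconv : Convex ℝ {N : M44 | InC N} := by
      intro x hx y hy a b ha hb _
      exact (InC.smul hx ha).add (InC.smul hy hb)
    have : h⁻¹ • M ∈ {N : M44 | InC N} := by
      refine convexHull_min ?_ hconv hm
      rintro _ ⟨σ, rfl⟩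
      exact InC.perm σ
    have h2 := InC.smul this hh
    rwa [smul_smul, mul_inv_cancel₀ h1.ne', one_smul] at h2

lemma InC.octa (k : Fin 4) (hk : (0 : Fin 4) ≠ k) (q : Fin 4 → ℝ) (h0 : ∀ j, 0 ≤ q j)
    (h1 : ∀ j, q j ≤ (∑ l, q l) / 2) :
    InC (fun i j => (if i = 0 ∨ i = k then (1:ℝ) else 0) * q j) := by
  simp only [Fin.sum_univ_four] at h1
  obtain ⟨d1, hd1⟩ : ∃ d, d = (q 0 + q 1 - q 2 - q 3) / 2 := ⟨_, rfl⟩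
  obtain ⟨d2, hd2⟩ : ∃ d, d = (q 0 + q 2 - q 1 - q 3) / 2 := ⟨_, rfl⟩
  obtain ⟨d3, hd3⟩ : ∃ d, d = (q 0 + q 3 - q 1 - q 2) / 2 := ⟨_, rfl⟩
  obtain ⟨e, he⟩ : ∃ e, e = ((q 0 + q 1 + q 2 + q 3) / 2 - |d1| - |d2| - |d3|) / 6 := ⟨_, rfl⟩
  have e0 : 0 ≤ e := by
    have a0 := h0 0; have a1 := h0 1; have a2 := h0 2; have a3 := h0 3
    have b0 := h1 0; have b1 := h1 1; have b2 := h1 2; have b3 := h1 3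
    rw [he]
    rcases abs_cases d1 with ⟨h, -⟩ | ⟨h, -⟩ <;> rcases abs_cases d2 with ⟨h', -⟩ | ⟨h', -⟩ <;>
      rcases abs_cases d3 with ⟨h'', -⟩ | ⟨h'', -⟩ <;> rw [h, h', h''] <;> subst hd1 hd2 hd3 <;>
      linarith
  have p : ∀ d : ℝ, 0 ≤ (|d| + d) / 2 + e := fun d => by linarith [neg_abs_le d]
  have n : ∀ d : ℝ, 0 ≤ (|d| - d) / 2 + e := fun d => by linarith [le_abs_self d]
  have := ((((((InC.rect 0 k 0 1 hk (by decide)).smul (p d1)).add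
    ((InC.rect 0 k 2 3 hk (by decide)).smul (n d1))).add
    ((InC.rect 0 k 0 2 hk (by decide)).smul (p d2))).add
    ((InC.rect 0 k 1 3 hk (by decide)).smul (n d2))).add
    ((InC.rect 0 k 0 3 hk (by decide)).smul (p d3))).add
    ((InC.rect 0 k 1 2 hk (by decide)).smul (n d3))
  refine (congrArg InC ?_).mpr this
  funext i j
  simp only [Matrix.add_apply, Matrix.smul_apply, smul_eq_mul, rectM_app]
  by_cases hi : i = 0 ∨ i = k
  · simp only [hi, if_true, he]
    fin_cases j <;> simp <;> linarith
  · simp only [hi, if_false]; ring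


lemma flow_pert {ι : Type*} [Fintype ι] [DecidableEq ι] (a : ι → ℝ) (k : ι) (e : ℝ) :
    ∑ i, (a i - if i = k then e else 0) ^ 2 = ∑ i, a i ^ 2 - 2 * a k * e + e ^ 2 := by
  have : ∀ i, (a i - if i = k then e else 0) ^ 2
      = a i ^ 2 + (if i = k then (- 2 * a k * e + e ^ 2) else 0) := by
    intro i; split_ifs with h
    · subst h; ring
    · ring
  simp only [this, Finset.sum_add_distrib, Finset.sum_ite_eq', Finset.mem_univ, if_true]
  ring

lemma flow {ι κ : Type*} [Fintype ι] [Fintype κ] [DecidableEq ι] [DecidableEq κ]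
    (c : ι → κ → ℝ) (p : ι → ℝ) (s : κ → ℝ) (hc : ∀ k j, 0 ≤ c k j)
    (hps : ∑ k, p k = ∑ j, s j)
    (hcut : ∀ I : Finset ι, ∑ k ∈ I, p k ≤ ∑ j, min (∑ k ∈ I, c k j) (s j)) :
    ∃ q : ι → κ → ℝ, (∀ k j, 0 ≤ q k j) ∧ (∀ k j, q k j ≤ c k j) ∧
      (∀ k, ∑ j, q k j = p k) ∧ (∀ j, ∑ k, q k j = s j) := by
  classical
  let Φ : (ι → κ → ℝ) → ℝ := fun q =>
    ∑ k, (p k - ∑ j, q k j) ^ 2 + ∑ j, (s j - ∑ k, q k j) ^ 2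
  have hcpt : IsCompact (Set.Icc (0 : ι → κ → ℝ) c) := isCompact_Icc
  have hΦ : Continuous Φ := by fun_prop
  obtain ⟨q, hq, hmin⟩ := hcpt.exists_isMinOn
    ⟨0, le_rfl, fun k j => hc k j⟩ hΦ.continuousOn
  have q0 : ∀ k j, 0 ≤ q k j := fun k j => hq.1 k j
  have q1 : ∀ k j, q k j ≤ c k j := fun k j => hq.2 k j
  obtain ⟨a, ha⟩ : ∃ a : ι → ℝ, ∀ k, a k = p k - ∑ j, q k j := ⟨_, fun _ => rfl⟩
  obtain ⟨b, hb⟩ : ∃ b : κ → ℝ, ∀ k, b k = s k - ∑ j, q j k := ⟨_, fun _ => rfl⟩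
  have key : ∀ k j (e : ℝ), 0 ≤ q k j + e → q k j + e ≤ c k j →
      0 ≤ - 2 * (a k + b j) * e + 2 * e ^ 2 := by
    intro k j e h0 h1
    have := hmin (show (fun k' j' => q k' j' + if k' = k then (if j' = j then e else 0) else 0) ∈
        Set.Icc (0 : ι → κ → ℝ) c from by
      constructor
      · intro k' j'
        change (0:ℝ) ≤ q k' j' + _
        split_ifs with h h'
        · subst h h'; exact h0
        · simpa using q0 _ _
        · simpa using q0 _ _
      · intro k' j'
        change q k' j' + _ ≤ _
        split_ifs with h h'
        · subst h h'; exact h1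
        · simpa using q1 _ _
        · simpa using q1 _ _)
    have r1 : ∀ k', p k' - ∑ j', (q k' j' + if k' = k then (if j' = j then e else 0) else 0)
        = a k' - if k' = k then e else 0 := by
      intro k'
      rw [Finset.sum_add_distrib, ha]
      split_ifs <;> simp <;> ring
    have r2 : ∀ j', s j' - ∑ k', (q k' j' + if k' = k then (if j' = j then e else 0) else 0)
        = b j' - if j' = j then e else 0 := by
      intro j'
      rw [Finset.sum_add_distrib, hb]
      simp; ring
    change Φ q ≤ Φ _ at this
    simp only [Φ] at this
    simp only [r1, r2, flow_pert, ← ha, ← hb] at this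
    linarith
  have up : ∀ k j, 0 < a k + b j → q k j = c k j := by
    intro k j h
    by_contra hne
    have hlt : q k j < c k j := lt_of_le_of_ne (q1 k j) hne
    obtain ⟨e, he⟩ : ∃ e, e = min (c k j - q k j) ((a k + b j) / 2) := ⟨_, rfl⟩
    have e0 : 0 < e := by rw [he]; exact lt_min (by linarith) (by linarith)
    have e1 : e ≤ c k j - q k j := by rw [he]; exact min_le_left _ _
    have e2 : e ≤ (a k + b j) / 2 := by rw [he]; exact min_le_right _ _
    have := key k j e (by linarith [q0 k j]) (by linarith)
    nlinarith
  have dn : ∀ k j, a k + b j < 0 → q k j = 0 := by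
    intro k j h
    by_contra hne
    have hlt : 0 < q k j := lt_of_le_of_ne (q0 k j) (Ne.symm hne)
    obtain ⟨e, he⟩ : ∃ e, e = min (q k j) (-(a k + b j) / 2) := ⟨_, rfl⟩
    have e0 : 0 < e := by rw [he]; exact lt_min (by linarith) (by linarith)
    have e1 : e ≤ q k j := by rw [he]; exact min_le_left _ _
    have e2 : e ≤ -(a k + b j) / 2 := by rw [he]; exact min_le_right _ _
    have := key k j (-e) (by linarith) (by linarith [q1 k j])
    nlinarith
  have hab : ∑ k, a k = ∑ j, b j := by
    simp only [ha, hb, Finset.sum_sub_distrib, hps]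
    rw [Finset.sum_comm]
  obtain ⟨I, hI⟩ : ∃ I : Finset ι, I = Finset.univ.filter (fun k => 0 ≤ a k) := ⟨_, rfl⟩
  have mI : ∀ k, k ∈ I ↔ 0 ≤ a k := by intro k; simp [hI]
  have h1 : ∀ j, min (∑ k ∈ I, c k j) (s j) ≤ ∑ k ∈ I, q k j + min (b j) 0 := by
    intro j
    by_cases hj : b j ≤ 0
    · refine (min_le_right _ _).trans ?_
      rw [min_eq_left hj, hb]
      have : ∑ k ∈ I, q k j = ∑ k, q k j := by
        refine Finset.sum_subset (Finset.subset_univ _) fun k _ hk => ?_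
        rw [mI] at hk
        exact dn k j (by linarith)
      linarith
    · refine (min_le_left _ _).trans ?_
      rw [min_eq_right (by linarith)]
      have : ∑ k ∈ I, c k j = ∑ k ∈ I, q k j := by
        refine Finset.sum_congr rfl fun k hk => ?_
        rw [mI] at hk
        rw [up k j (by linarith)]
      linarith
  have h2 := (hcut I).trans (Finset.sum_le_sum fun j _ => h1 j)
  rw [Finset.sum_add_distrib, Finset.sum_comm] at h2
  have h3 : ∑ k ∈ I, a k ≤ ∑ j, min (b j) 0 := by
    simp only [ha, Finset.sum_sub_distrib]; linarith
  have h4 : 0 ≤ ∑ k ∈ I, a k := Finset.sum_nonneg fun k hk => (mI k).1 hk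
  have h5 : ∑ j, min (b j) 0 ≤ 0 := Finset.sum_nonpos fun j _ => min_le_right _ _
  have h6 : ∀ k ∈ I, a k = 0 :=
    (Finset.sum_eq_zero_iff_of_nonneg fun k hk => (mI k).1 hk).1 (by linarith)
  have h7 : ∀ j ∈ Finset.univ, min (b j) 0 = 0 :=
    (Finset.sum_eq_zero_iff_of_nonpos fun j _ => min_le_right _ _).1 (by linarith)
  have a0 : ∀ k, a k ≤ 0 := by
    intro k
    by_cases hk : 0 ≤ a k
    · exact (h6 k ((mI k).2 hk)).le
    · linarith
  have b0 : ∀ j, 0 ≤ b j := fun j => min_eq_right_iff.1 (h7 j (Finset.mem_univ _))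
  have sa : ∑ k, a k ≤ 0 := Finset.sum_nonpos fun k _ => a0 k
  have sb : 0 ≤ ∑ j, b j := Finset.sum_nonneg fun k _ => b0 k
  have az := (Finset.sum_eq_zero_iff_of_nonpos fun k _ => a0 k).1 (by linarith : ∑ k, a k = 0)
  have bz := (Finset.sum_eq_zero_iff_of_nonneg fun k _ => b0 k).1 (by linarith : ∑ k, b k = 0)
  refine ⟨q, q0, q1, fun k => ?_, fun j => ?_⟩
  · have := az k (Finset.mem_univ _); rw [ha] at this; linarith
  · have := bz j (Finset.mem_univ _); rw [hb] at this; linarith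

set_option linter.all false

def chiZ : Fin 4 → Fin 4 → ℤ :=
  ![![1,1,1,1], ![1,1,-1,-1], ![1,-1,1,-1], ![1,-1,-1,1]]

def chi (k i : Fin 4) : ℝ := chiZ k i

def four (N : M44) (k l : Fin 4) : ℝ := ∑ i, ∑ j, chi k i * chi l j * N i j

def DD (N : M44) (k l : Fin 4) : ℝ := |four N k l|

lemma chi_swap : ∀ x y : Fin 4, ∃ m n : Fin 4, m ≠ 0 ∧ n ≠ 0 ∧
    ∀ k, (∀ i, chiZ k (Equiv.swap x y i) = chiZ (Equiv.swap m n k) i) ∨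
      (∀ i, chiZ k (Equiv.swap x y i) = - chiZ (Equiv.swap m n k) i) := by
  decide +kernel

lemma chi_perm (σ : Equiv.Perm (Fin 4)) : ∃ π : Equiv.Perm (Fin 4), π 0 = 0 ∧
    ∀ k, (∀ i, chiZ k (σ i) = chiZ (π k) i) ∨ (∀ i, chiZ k (σ i) = - chiZ (π k) i) := by
  induction σ using Equiv.Perm.swap_induction_on with
  | one => exact ⟨1, rfl, fun k => Or.inl fun i => rfl⟩
  | swap_mul f x y _ ih =>
    obtain ⟨π, h0, h⟩ := ih
    obtain ⟨m, n, hm, hn, hmn⟩ := chi_swap x y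
    refine ⟨π * Equiv.swap m n, ?_, fun k => ?_⟩
    · rw [Equiv.Perm.mul_apply, Equiv.swap_apply_of_ne_of_ne hm.symm hn.symm, h0]
    · simp only [Equiv.Perm.mul_apply]
      rcases hmn k with a | a <;> rcases h (Equiv.swap m n k) with b | b
      · left; intro i; rw [a, b]
      · right; intro i; rw [a, b]
      · right; intro i; rw [a, b]
      · left; intro i; rw [a, b, neg_neg]

lemma chi_perm' (σ : Equiv.Perm (Fin 4)) : ∃ π : Equiv.Perm (Fin 4), π 0 = 0 ∧
    ∃ e : Fin 4 → ℝ, (∀ k, |e k| = 1) ∧ ∀ k i, chi k (σ.symm i) = e k * chi (π k) i := by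
  obtain ⟨π, h0, h⟩ := chi_perm σ.symm
  refine ⟨π, h0, ?_⟩
  have : ∀ k, ∃ e : ℝ, |e| = 1 ∧ ∀ i, chi k (σ.symm i) = e * chi (π k) i := by
    intro k
    rcases h k with h | h
    · exact ⟨1, by simp, fun i => by simp [chi, h]⟩
    · exact ⟨-1, by simp, fun i => by simp [chi, h]⟩
  choose e he using this
  exact ⟨e, fun k => (he k).1, fun k i => (he k).2 i⟩

structure Hyp (N : M44) : Prop where
  nn : ∀ i j, 0 ≤ N i j
  h5 : ∀ i j, 0 ≤ pt N i j
  r3 : ∀ k, k ≠ 0 → ∑ m, DD N m 0 + ∑ l, DD N k l ≤ 2 * tot N + 2 * DD N k 0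
  c3 : ∀ l, l ≠ 0 → ∑ m, DD N 0 m + ∑ k, DD N k l ≤ 2 * tot N + 2 * DD N 0 l
  r12 : ∀ l, l ≠ 0 → ∑ k, ∑ m, DD N k m - ∑ m, DD N 0 m - ∑ k, DD N k l + 2 * DD N 0 l
    ≤ 2 * tot N
  c12 : ∀ k, k ≠ 0 → ∑ k, ∑ m, DD N k m - ∑ m, DD N m 0 - ∑ l, DD N k l + 2 * DD N k 0
    ≤ 2 * tot N

lemma rs_pm (σ τ : Equiv.Perm (Fin 4)) (N : M44) (i : Fin 4) : rs (pm σ τ N) i = rs N (σ i) :=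
  Equiv.sum_comp τ (fun j => N (σ i) j)

lemma cs_pm (σ τ : Equiv.Perm (Fin 4)) (N : M44) (i : Fin 4) : cs (pm σ τ N) i = cs N (τ i) :=
  Equiv.sum_comp σ (fun j => N j (τ i))

lemma tot_rs (N : M44) : tot N = ∑ i, rs N i := rfl

lemma tot_cs (N : M44) : tot N = ∑ i, cs N i := Finset.sum_comm

lemma tot_pm (σ τ : Equiv.Perm (Fin 4)) (N : M44) : tot (pm σ τ N) = tot N := by
  simp only [tot_rs, rs_pm]; exact Equiv.sum_comp σ (fun j => rs N j)

lemma pt_pm (σ τ : Equiv.Perm (Fin 4)) (N : M44) : pt (pm σ τ N) = pm σ τ (pt N) := by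
  funext i j
  simp only [pt, pm, tot_pm]
  change tot N / 4 - rs (pm σ τ N) i / 2 - cs (pm σ τ N) j / 2 + _ = _
  rw [rs_pm, cs_pm]

lemma DD_pm (σ τ : Equiv.Perm (Fin 4)) : ∃ π ν : Equiv.Perm (Fin 4), π 0 = 0 ∧ ν 0 = 0 ∧
    ∀ N k l, DD (pm σ τ N) k l = DD N (π k) (ν l) := by
  obtain ⟨π, h0, e, he, h⟩ := chi_perm' σ
  obtain ⟨ν, h0', e', he', h'⟩ := chi_perm' τ
  refine ⟨π, ν, h0, h0', fun N k l => ?_⟩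
  have : four (pm σ τ N) k l = (e k * e' l) * four N (π k) (ν l) := by
    have h1 : four (pm σ τ N) k l = ∑ i, ∑ j, chi k (σ.symm i) * chi l (τ.symm j) * N i j := by
      rw [← Equiv.sum_comp σ]
      refine Finset.sum_congr rfl fun i _ => ?_
      rw [← Equiv.sum_comp τ (fun j => chi k (σ.symm (σ i)) * chi l (τ.symm j) * N (σ i) j)]
      simp [pm]
    rw [h1, four, Finset.mul_sum]
    refine Finset.sum_congr rfl fun i _ => ?_
    rw [Finset.mul_sum]
    refine Finset.sum_congr rfl fun j _ => ?_
    rw [h, h']; ring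
  rw [DD, this, abs_mul, abs_mul, he, he', DD]; ring

lemma Hyp.pm {N : M44} (h : Hyp N) (σ τ : Equiv.Perm (Fin 4)) : Hyp (pm σ τ N) := by
  obtain ⟨π, ν, h0, h0', hD⟩ := DD_pm σ τ
  have n0 : ∀ k, k ≠ 0 → π k ≠ 0 := fun k hk h => hk (π.injective (h.trans h0.symm))
  have n0' : ∀ k, k ≠ 0 → ν k ≠ 0 := fun k hk h => hk (ν.injective (h.trans h0'.symm))
  have s1 : ∀ f : Fin 4 → ℝ, ∑ k, f (π k) = ∑ k, f k := fun f => Equiv.sum_comp π f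
  have s2 : ∀ f : Fin 4 → ℝ, ∑ k, f (ν k) = ∑ k, f k := fun f => Equiv.sum_comp ν f
  have s3 : ∀ i, ∑ l, DD N i (ν l) = ∑ l, DD N i l := fun i => s2 (fun l => DD N i l)
  have s4 : ∑ i, ∑ l, DD N (π i) l = ∑ i, ∑ l, DD N i l := s1 (fun i => ∑ l, DD N i l)
  refine ⟨fun i j => h.nn _ _, fun i j => ?_, ?_, ?_, ?_, ?_⟩
  · rw [pt_pm]; exact h.h5 _ _
  · intro k hk
    simp only [hD, tot_pm, h0, h0', s1 (fun k => DD N k 0), s2 (fun l => DD N (π k) l)]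
    exact h.r3 _ (n0 k hk)
  · intro k hk
    simp only [hD, tot_pm, h0, h0', s2 (fun k => DD N 0 k), s1 (fun l => DD N l (ν k))]
    exact h.c3 _ (n0' k hk)
  · intro k hk
    simp only [hD, tot_pm, h0, h0', s1 (fun l => DD N l (ν k)), s3, s4]
    exact h.r12 _ (n0' k hk)
  · intro k hk
    simp only [hD, tot_pm, h0, h0', s1 (fun k => DD N k 0), s3, s4]
    exact h.c12 _ (n0 k hk)

lemma tot_tr (N : M44) : tot (tr N) = tot N := Finset.sum_comm

lemma DD_tr (N : M44) (k l : Fin 4) : DD (tr N) k l = DD N l k := by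
  unfold DD four
  rw [Finset.sum_comm]
  congr 1
  refine Finset.sum_congr rfl fun i _ => Finset.sum_congr rfl fun j _ => ?_
  simp only [tr]; ring

lemma pt_tr (N : M44) (i j : Fin 4) : pt (tr N) i j = pt N j i := by
  simp only [pt, tot_tr]
  change tot N / 4 - cs N i / 2 - rs N j / 2 + N j i = _
  ring

lemma Hyp.tr {N : M44} (h : Hyp N) : Hyp (tr N) := by
  refine ⟨fun i j => h.nn _ _, fun i j => ?_, ?_, ?_, ?_, ?_⟩
  · rw [pt_tr]; exact h.h5 _ _
  · simp only [DD_tr, tot_tr]; exact h.c3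
  · simp only [DD_tr, tot_tr]; exact h.r3
  · simp only [DD_tr, tot_tr]
    rw [Finset.sum_comm]; exact h.c12
  · simp only [DD_tr, tot_tr]
    rw [Finset.sum_comm]; exact h.r12

lemma rs_pt (N : M44) (i : Fin 4) : rs (pt N) i = tot N / 2 - rs N i := by
  have : tot N = ∑ j, cs N j := tot_cs N
  simp only [rs, pt, Finset.sum_add_distrib, Finset.sum_sub_distrib, ← Finset.sum_div]
  simp only [Finset.sum_const, Finset.card_univ, Fintype.card_fin, nsmul_eq_mul]
  push_cast; linarith

lemma cs_pt (N : M44) (i : Fin 4) : cs (pt N) i = tot N / 2 - cs N i := by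
  have : tot N = ∑ j, rs N j := tot_rs N
  simp only [cs, pt, Finset.sum_add_distrib, Finset.sum_sub_distrib, ← Finset.sum_div]
  simp only [Finset.sum_const, Finset.card_univ, Fintype.card_fin, nsmul_eq_mul]
  push_cast; linarith

lemma tot_pt (N : M44) : tot (pt N) = tot N := by
  have : tot N = ∑ j, rs N j := tot_rs N
  rw [tot_rs]; simp only [rs_pt, Finset.sum_sub_distrib, Finset.sum_const, Finset.card_univ,
    Fintype.card_fin, nsmul_eq_mul]
  push_cast; linarith

lemma pt_pt (N : M44) : pt (pt N) = N := by
  funext i j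
  change tot (pt N) / 4 - rs (pt N) i / 2 - cs (pt N) j / 2 + pt N i j = _
  rw [tot_pt, rs_pt, cs_pt, pt]; ring

lemma DD_pt (N : M44) (k l : Fin 4) : DD (pt N) k l = DD N k l := by
  have : four (pt N) k l = four N k l ∨ four (pt N) k l = - four N k l := by
    fin_cases k <;> fin_cases l <;>
      simp [four, pt, tot, rs, cs, Fin.sum_univ_four, chi, chiZ] <;> first
        | (left; ring1)
        | (right; ring1)
  rcases this with h | h <;> simp [DD, h]

lemma Hyp.pt {N : M44} (h : Hyp N) : Hyp (pt N) := by
  refine ⟨h.h5, fun i j => ?_, ?_, ?_, ?_, ?_⟩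
  · rw [pt_pt]; exact h.nn _ _
  · simp only [DD_pt, tot_pt]; exact h.r3
  · simp only [DD_pt, tot_pt]; exact h.c3
  · simp only [DD_pt, tot_pt]; exact h.r12
  · simp only [DD_pt, tot_pt]; exact h.c12

lemma four_le (N : M44) (k l : Fin 4) : four N k l ≤ DD N k l := le_abs_self _
lemma neg_four_le (N : M44) (k l : Fin 4) : - four N k l ≤ DD N k l := neg_le_abs _

lemma Hyp.f3r0 {N : M44} (h : Hyp N) : 2 * N 0 0 + 2 * N 0 1 ≤ rs N 0 + cs N 0 := by
  have h1 := h.c3 1 (by decide)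
  have a0 := four_le N 0 0
  have a1 := neg_four_le N 0 2
  have a2 := neg_four_le N 0 3
  have a3 := four_le N 1 1
  have a4 := four_le N 2 1
  have a5 := four_le N 3 1
  simp only [Fin.sum_univ_four] at h1
  simp [four, tot, rs, cs, Fin.sum_univ_four, chi, chiZ] at *
  linarith

lemma Hyp.f120 {N : M44} (h : Hyp N) : N 0 0 + N 0 1 + N 0 2 + N 1 0 + N 2 1 ≤
    N 0 3 + 3 * N 1 1 + 3 * N 1 2 + N 1 3 + 3 * N 2 0 + 3 * N 2 2 + N 2 3
    + N 3 0 + N 3 1 + N 3 2 + 3 * N 3 3 := by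
  have h1 := h.r12 1 (by decide)
  have a1 := four_le N 0 1
  have a2 := four_le N 1 0
  have a3 := four_le N 2 0
  have a4 := four_le N 3 0
  have b1 := four_le N 1 2
  have b2 := four_le N 1 3
  have b3 := neg_four_le N 2 2
  have b4 := neg_four_le N 2 3
  have b5 := four_le N 3 2
  have b6 := neg_four_le N 3 3
  simp only [Fin.sum_univ_four] at h1
  simp [four, tot, Fin.sum_univ_four, chi, chiZ] at *
  linarith

lemma Hyp.f3r {N : M44} (h : Hyp N) (i j j' : Fin 4) (hj : j ≠ j') :
    2 * N i j + 2 * N i j' ≤ rs N i + cs N j := by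
  obtain ⟨t, t0, t1⟩ := perm2 j j' hj
  have := (h.pm (Equiv.swap 0 i) t).f3r0
  rw [rs_pm, cs_pm] at this
  simpa [Paper.pm, t0, t1] using this

lemma Hyp.f3c {N : M44} (h : Hyp N) (i i' j : Fin 4) (hj : i ≠ i') :
    2 * N i j + 2 * N i' j ≤ rs N i + cs N j := by
  have := h.tr.f3r j i i' hj
  change 2 * N i j + 2 * N i' j ≤ cs N j + rs N i at this
  linarith


lemma min3 (a b : ℝ) : min a b = a ∨ min a b = b := min_choice a b

lemma pureA (n k : Fin 4 → ℝ) (p h T : ℝ) (n0 : ∀ j, 0 ≤ n j) (k0 : ∀ j, 0 ≤ k j) (p0 : 0 ≤ p)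
    (h0 : 0 ≤ h) (B1 : ∀ j, k j ≤ (T - h) / 2) (B2 : p ≤ T - h)
    (B3 : k 0 + k 1 + k 2 + k 3 = T - h) (S : n 0 + n 1 + n 2 + n 3 = p + h)
    (C : ∀ j, 0 ≤ T - p - 2 * k j - h + 2 * n j)
    (E : ∀ j j', j ≠ j' → n j + n j' ≤ p / 2 + h + k j) (F : ∀ j, n j ≤ p / 2 + h)
    (G : ∀ j, n j ≤ k j + h) : p ≤ ∑ j, min (min (n j) (p / 2)) (k j) := by
  rw [Fin.sum_univ_four]
  have c : ∀ j, min (min (n j) (p / 2)) (k j) = n j ∨ min (min (n j) (p / 2)) (k j) = p / 2 ∨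
      min (min (n j) (p / 2)) (k j) = k j := by
    intro j
    rcases min_choice (min (n j) (p / 2)) (k j) with h | h
    · rw [h]; rcases min_choice (n j) (p / 2) with h | h <;> simp [h]
    · simp [h]
  have a0 := n0 0; have a1 := n0 1; have a2 := n0 2; have a3 := n0 3
  have b0 := k0 0; have b1 := k0 1; have b2 := k0 2; have b3 := k0 3
  have c0 := B1 0; have c1 := B1 1; have c2 := B1 2; have c3 := B1 3
  have d0 := C 0; have d1 := C 1; have d2 := C 2; have d3 := C 3
  have f0 := F 0; have f1 := F 1; have f2 := F 2; have f3 := F 3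
  have g0 := G 0; have g1 := G 1; have g2 := G 2; have g3 := G 3
  have e01 := E 0 1 (by decide); have e02 := E 0 2 (by decide); have e03 := E 0 3 (by decide)
  have e10 := E 1 0 (by decide); have e12 := E 1 2 (by decide); have e13 := E 1 3 (by decide)
  have e20 := E 2 0 (by decide); have e21 := E 2 1 (by decide); have e23 := E 2 3 (by decide)
  have e30 := E 3 0 (by decide); have e31 := E 3 1 (by decide); have e32 := E 3 2 (by decide)
  clear n0 k0 B1 C F G E
  rcases c 0 with h | h | h <;> rw [h] <;> rcases c 1 with h | h | h <;> rw [h] <;>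
  rcases c 2 with h | h | h <;> rw [h] <;> rcases c 3 with h | h | h <;> rw [h] <;> linarith

lemma pure3 (p0 p1 p2 q0 q1 q2 k3 r1 r2 h p3 q3 : ℝ)
    (n0 : 0 ≤ p0) (n1 : 0 ≤ p1) (n2 : 0 ≤ p2) (m0 : 0 ≤ q0) (m1 : 0 ≤ q1) (m2 : 0 ≤ q2)
    (hr1 : 0 ≤ r1) (hr2 : 0 ≤ r2) (hh : 0 ≤ h)
    (a1 : r1 ≤ k3 + (min p0 (r1/2) + min p1 (r1/2) + min p2 (r1/2)))
    (a2 : r2 ≤ k3 + (min q0 (r2/2) + min q1 (r2/2) + min q2 (r2/2)))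
    (sp : p0 + p1 + p2 + p3 = r1 + h) (sq : q0 + q1 + q2 + q3 = r2 + h)
    (G : p3 + q3 ≤ k3 + h)
    (F0 : p0 ≤ r1 / 2 + h) (F1 : p1 ≤ r1 / 2 + h) (F2 : p2 ≤ r1 / 2 + h)
    (F0' : q0 ≤ r2 / 2 + h) (F1' : q1 ≤ r2 / 2 + h) (F2' : q2 ≤ r2 / 2 + h)
    (S0 : p0 + q0 ≤ h + (r1 + r2) / 2) (S1 : p1 + q1 ≤ h + (r1 + r2) / 2)
    (S2 : p2 + q2 ≤ h + (r1 + r2) / 2)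
    (T01 : p0 + p3 + q1 + q3 ≤ (r1 + r2) / 2 + 2 * h + k3)
    (T02 : p0 + p3 + q2 + q3 ≤ (r1 + r2) / 2 + 2 * h + k3)
    (T10 : p1 + p3 + q0 + q3 ≤ (r1 + r2) / 2 + 2 * h + k3)
    (T12 : p1 + p3 + q2 + q3 ≤ (r1 + r2) / 2 + 2 * h + k3)
    (T20 : p2 + p3 + q0 + q3 ≤ (r1 + r2) / 2 + 2 * h + k3)
    (T21 : p2 + p3 + q1 + q3 ≤ (r1 + r2) / 2 + 2 * h + k3) :
    r1 + r2 ≤ k3 + (min p0 (r1/2) + min p1 (r1/2) + min p2 (r1/2))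
      + (min q0 (r2/2) + min q1 (r2/2) + min q2 (r2/2)) := by
  rcases min_choice p0 (r1/2) with h | h <;> rw [h] at a1 ⊢ <;>
  rcases min_choice p1 (r1/2) with h | h <;> rw [h] at a1 ⊢ <;>
  rcases min_choice p2 (r1/2) with h | h <;> rw [h] at a1 ⊢ <;>
  rcases min_choice q0 (r2/2) with h | h <;> rw [h] at a2 ⊢ <;>
  rcases min_choice q1 (r2/2) with h | h <;> rw [h] at a2 ⊢ <;>
  rcases min_choice q2 (r2/2) with h | h <;> rw [h] at a2 ⊢ <;> linarith

structure Top (N : M44) : Prop where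
  r : ∀ i, rs N i ≤ rs N 0
  r' : ∀ i, tot N / 2 - rs N i ≤ rs N 0
  c : ∀ i, cs N i ≤ rs N 0
  c' : ∀ i, tot N / 2 - cs N i ≤ rs N 0

def hh (N : M44) : ℝ := tot N / 2 - rs N 0
def rh (N : M44) (k : Fin 4) : ℝ := rs N k - hh N
def kp (N : M44) (j : Fin 4) : ℝ := (cs N j - hh N) / 2
def cp (N : M44) (k j : Fin 4) : ℝ := min (N k j) (rh N k / 2)

section facts
variable {N : M44} (H : Hyp N) (P : Top N)
include H

lemma F_hh : 0 ≤ hh N := by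
  have : 0 ≤ rs (pt N) 0 := Finset.sum_nonneg fun j _ => H.h5 0 j
  rw [rs_pt] at this; exact this

lemma F_D (j) : kp N j ≤ N 0 j := by
  have := H.h5 0 j
  simp only [pt] at this
  unfold kp hh; linarith

lemma F_C (k j) : 0 ≤ rs N 0 - rh N k - 2 * kp N j - hh N + 2 * N k j := by
  have := H.h5 k j
  simp only [pt] at this
  unfold rh kp hh; linarith

lemma F_E (k j j') (hj : j ≠ j') : N k j + N k j' ≤ rh N k / 2 + hh N + kp N j := by
  have := H.f3r k j j' hj
  unfold rh kp; linarith

lemma F_F' (k j) (hk : k ≠ 0) : N k j + N 0 j ≤ rh N k / 2 + hh N + kp N j := by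
  have := H.f3c k 0 j hk
  unfold rh kp; linarith

lemma F_F (k j) (hk : k ≠ 0) : N k j ≤ rh N k / 2 + hh N := by
  have := F_F' H k j hk
  have := F_D H j
  linarith

omit H in
lemma F_cs (j) : N 0 j + N 1 j + N 2 j + N 3 j = 2 * kp N j + hh N := by
  unfold kp cs; rw [Fin.sum_univ_four]; ring

omit H in
lemma F_rs (k) : N k 0 + N k 1 + N k 2 + N k 3 = rh N k + hh N := by
  unfold rh rs; rw [Fin.sum_univ_four]; ring

omit H in
lemma F_sk : kp N 0 + kp N 1 + kp N 2 + kp N 3 = rs N 0 - hh N := by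
  have := tot_cs N
  rw [Fin.sum_univ_four] at this
  unfold kp hh; linarith

omit H in
lemma F_sr : rh N 1 + rh N 2 + rh N 3 = rs N 0 - hh N := by
  have := tot_rs N
  rw [Fin.sum_univ_four] at this
  unfold rh hh; linarith

lemma F_G (k j) (hk : k ≠ 0) : N k j ≤ kp N j + hh N := by
  have h1 := F_cs (N := N) j
  have := F_D H j
  have a1 := H.nn 1 j
  have a2 := H.nn 2 j
  have a3 := H.nn 3 j
  fin_cases k
  · exact absurd rfl hk
  · change N 1 j ≤ _; linarith
  · change N 2 j ≤ _; linarith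
  · change N 3 j ≤ _; linarith

include P
omit H in
lemma F_rh (k) : 0 ≤ rh N k := by
  have := P.r' k
  unfold rh hh; linarith

omit H in
lemma F_kp (k) : 0 ≤ kp N k := by
  have := P.c' k
  unfold kp hh; linarith

omit H in
lemma F_B1 (k) : kp N k ≤ (rs N 0 - hh N) / 2 := by
  have := P.c k
  unfold kp; linarith

lemma F_cp (k j) : 0 ≤ cp N k j := le_min (H.nn k j) (by have := F_rh P k; linarith)

lemma cutA (k : Fin 4) (hk : k ≠ 0) : rh N k ≤ ∑ j, min (cp N k j) (kp N j) := by
  unfold cp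
  refine pureA (N k) (kp N) (rh N k) (hh N) (rs N 0) (H.nn k) (F_kp P) (F_rh P k)
    (F_hh H) (F_B1 P) ?_ F_sk (F_rs k) (F_C H k) (F_E H k) (fun j => F_F H k j hk)
    (fun j => F_G H k j hk)
  have := P.r k
  unfold rh; linarith

lemma cutB (j : Fin 4) : kp N j ≤ cp N 1 j + cp N 2 j + cp N 3 j := by
  have h1 := F_cs (N := N) j
  have b := F_B1 P j
  have s := F_sr (N := N)
  have c1 := F_C H 1 j
  have c2 := F_C H 2 j
  have c3 := F_C H 3 j
  have f1 := F_F' H 1 j (by decide)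
  have f2 := F_F' H 2 j (by decide)
  have f3 := F_F' H 3 j (by decide)
  have g : N 0 j ≤ hh N + kp N j := by
    have h0 : rs N 0 = N 0 0 + N 0 1 + N 0 2 + N 0 3 := by rw [rs, Fin.sum_univ_four]
    have h2 := F_sk (N := N)
    have a0 := F_D H 0
    have a1 := F_D H 1
    have a2 := F_D H 2
    have a3 := F_D H 3
    fin_cases j
    · change N 0 0 ≤ hh N + kp N 0; linarith
    · change N 0 1 ≤ hh N + kp N 1; linarith
    · change N 0 2 ≤ hh N + kp N 2; linarith
    · change N 0 3 ≤ hh N + kp N 3; linarith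
  unfold cp
  rcases min_choice (N 1 j) (rh N 1/2) with h | h <;> rw [h] <;>
  rcases min_choice (N 2 j) (rh N 2/2) with h | h <;> rw [h] <;>
  rcases min_choice (N 3 j) (rh N 3/2) with h | h <;> rw [h] <;> linarith

omit P
lemma F_T (j0 j1 j2 j3 : Fin 4) (h : ∃ s : Equiv.Perm (Fin 4), s 0 = j0 ∧ s 1 = j1 ∧ s 2 = j2 ∧ s 3 = j3) :
    N 1 j0 + N 1 j3 + N 2 j1 + N 2 j3 ≤ (rh N 1 + rh N 2) / 2 + 2 * hh N + kp N j3 := by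
  obtain ⟨s, rfl, rfl, rfl, rfl⟩ := h
  have h1 := (H.pm 1 s).f120
  have e1 := rs_pm 1 s N 1
  have e2 := rs_pm 1 s N 2
  have e0 := rs_pm 1 s N 0
  have e3 := cs_pm 1 s N 3
  have e4 := tot_pm 1 s N
  simp only [Equiv.Perm.one_apply] at e0 e1 e2
  unfold rh kp hh
  rw [← e0, ← e1, ← e2, ← e3, ← e4]
  unfold rs cs tot
  simp only [Fin.sum_univ_four]
  unfold pm at h1 ⊢
  simp only [Equiv.Perm.one_apply] at h1 ⊢
  linarith

include P
lemma cut3 (j0 j1 j2 j3 : Fin 4) (h : ∃ s : Equiv.Perm (Fin 4), s 0 = j0 ∧ s 1 = j1 ∧ s 2 = j2 ∧ s 3 = j3) :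
    rh N 1 + rh N 2 ≤ kp N j3 + (cp N 1 j0 + cp N 1 j1 + cp N 1 j2)
      + (cp N 2 j0 + cp N 2 j1 + cp N 2 j2) := by
  have perm : ∀ f : Fin 4 → ℝ, f j0 + f j1 + f j2 + f j3 = f 0 + f 1 + f 2 + f 3 := by
    intro f
    obtain ⟨s, rfl, rfl, rfl, rfl⟩ := h
    have := Equiv.sum_comp s f
    simpa only [Fin.sum_univ_four] using this
  have p2 : ∀ t : Equiv.Perm (Fin 4), t 3 = 3 → ∀ a b, t 0 = a → t 1 = b → 
      N 1 (![j0, j1, j2, j3] a) + N 1 j3 + N 2 (![j0, j1, j2, j3] b) + N 2 j3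
        ≤ (rh N 1 + rh N 2) / 2 + 2 * hh N + kp N j3 := by
    intro t ht a b ha hb
    obtain ⟨s, rfl, rfl, rfl, rfl⟩ := h
    have : ∀ i, s i = ![s 0, s 1, s 2, s 3] i := by intro i; fin_cases i <;> rfl
    rw [← this, ← this]
    exact F_T H _ _ (s (t 2)) _ ⟨s * t, by simp [ha], by simp [hb], by simp, by simp [ht]⟩
  have a : ∀ k, k ≠ 0 → rh N k ≤ kp N j3 + (cp N k j0 + cp N k j1 + cp N k j2) := by
    intro k hk
    have := cutA H P k hk
    rw [Fin.sum_univ_four, ← perm (fun j => min (cp N k j) (kp N j))] at this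
    have b0 := min_le_left (cp N k j0) (kp N j0)
    have b1 := min_le_left (cp N k j1) (kp N j1)
    have b2 := min_le_left (cp N k j2) (kp N j2)
    have b3 := min_le_right (cp N k j3) (kp N j3)
    linarith
  have S : ∀ j, N 1 j + N 2 j ≤ hh N + (rh N 1 + rh N 2) / 2 := by
    intro j
    have h1 := F_cs (N := N) j
    have h2 := F_D H j
    have h3 := F_C H 3 j
    have s := F_sr (N := N)
    linarith
  unfold cp at a ⊢
  refine pure3 (N 1 j0) (N 1 j1) (N 1 j2) (N 2 j0) (N 2 j1) (N 2 j2) (kp N j3) (rh N 1) (rh N 2)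
    (hh N) (N 1 j3) (N 2 j3) (H.nn _ _) (H.nn _ _) (H.nn _ _) (H.nn _ _) (H.nn _ _) (H.nn _ _)
    (F_rh P _) (F_rh P _) (F_hh H) (a 1 (by decide)) (a 2 (by decide)) ?_ ?_ ?_
    (F_F H _ _ (by decide)) (F_F H _ _ (by decide)) (F_F H _ _ (by decide))
    (F_F H _ _ (by decide)) (F_F H _ _ (by decide)) (F_F H _ _ (by decide))
    (S _) (S _) (S _) ?_ ?_ ?_ ?_ ?_ ?_
  · rw [perm (fun j => N 1 j)]; exact F_rs 1
  · rw [perm (fun j => N 2 j)]; exact F_rs 2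
  · have h1 := F_cs (N := N) j3
    have h2 := F_D H j3
    have h3 := H.nn 3 j3
    linarith
  · exact p2 1 (by decide) 0 1 (by decide) (by decide)
  · exact p2 (Equiv.swap 1 2) (by decide) 0 2 (by decide) (by decide)
  · exact p2 (Equiv.swap 0 1) (by decide) 1 0 (by decide) (by decide)
  · exact p2 ((Equiv.swap 1 2).trans (Equiv.swap 0 1)) (by decide) 1 2 (by decide) (by decide)
  · exact p2 ((Equiv.swap 0 1).trans (Equiv.swap 1 2)) (by decide) 2 0 (by decide) (by decide)
  · exact p2 (Equiv.swap 0 2) (by decide) 2 1 (by decide) (by decide)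

lemma cutC : rh N 1 + rh N 2 ≤ ∑ j, min (cp N 1 j + cp N 2 j) (kp N j) := by
  rw [Fin.sum_univ_four]
  have s := F_sr (N := N)
  have s' := F_sk (N := N)
  have b : ∀ j, kp N j ≤ cp N 1 j + cp N 2 j + rh N 3 / 2 := by
    intro j
    have := cutB H P j
    have : cp N 3 j ≤ rh N 3 / 2 := min_le_right _ _
    linarith
  have b0 := b 0; have b1 := b 1; have b2 := b 2; have b3 := b 3
  have r3 := F_rh P 3
  have t3 := cut3 H P 0 1 2 3 ⟨1, by decide⟩
  have t2 := cut3 H P 0 1 3 2 ⟨Equiv.swap 2 3, by decide⟩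
  have t1 := cut3 H P 0 3 2 1 ⟨Equiv.swap 1 3, by decide⟩
  have t0 := cut3 H P 3 1 2 0 ⟨Equiv.swap 0 3, by decide⟩
  have a : ∀ k, k ≠ 0 → rh N k ≤ cp N k 0 + cp N k 1 + cp N k 2 + cp N k 3 := by
    intro k hk
    have := cutA H P k hk
    rw [Fin.sum_univ_four] at this
    have b0 := min_le_left (cp N k 0) (kp N 0)
    have b1 := min_le_left (cp N k 1) (kp N 1)
    have b2 := min_le_left (cp N k 2) (kp N 2)
    have b3 := min_le_left (cp N k 3) (kp N 3)
    linarith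
  have a1 := a 1 (by decide); have a2 := a 2 (by decide)
  rcases min_choice (cp N 1 0 + cp N 2 0) (kp N 0) with h | h <;> rw [h] <;>
  rcases min_choice (cp N 1 1 + cp N 2 1) (kp N 1) with h | h <;> rw [h] <;>
  rcases min_choice (cp N 1 2 + cp N 2 2) (kp N 2) with h | h <;> rw [h] <;>
  rcases min_choice (cp N 1 3 + cp N 2 3) (kp N 3) with h | h <;> rw [h] <;> linarith

end facts


lemma Top.pm1 {N : M44} (P : Top N) (σ : Equiv.Perm (Fin 4)) (h0 : σ 0 = 0) : Top (pm σ 1 N) := by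
  refine ⟨fun i => ?_, fun i => ?_, fun i => ?_, fun i => ?_⟩ <;>
    simp only [rs_pm, cs_pm, tot_pm, h0]
  · exact P.r _
  · exact P.r' _
  · exact P.c _
  · exact P.c' _

lemma cutC' {N : M44} (H : Hyp N) (P : Top N) (σ : Equiv.Perm (Fin 4)) (h0 : σ 0 = 0)
    (a b : Fin 4) (h1 : σ 1 = a) (h2 : σ 2 = b) :
    rh N a + rh N b ≤ ∑ j, min (cp N a j + cp N b j) (kp N j) := by
  have := cutC (H.pm σ 1) (P.pm1 σ h0)
  simp only [rh, cp, kp, hh, rs_pm, cs_pm, tot_pm, h0, h1, h2, Equiv.Perm.one_apply] at this ⊢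
  simpa only [pm, h1, h2, Equiv.Perm.one_apply] using this

lemma fin3sets : ∀ I : Finset (Fin 3), I = ∅ ∨ I = {0} ∨ I = {1} ∨ I = {2} ∨ I = {0, 1} ∨
    I = {0, 2} ∨ I = {1, 2} ∨ I = Finset.univ := by decide

def octaM (k : Fin 4) (q : Fin 4 → ℝ) : M44 :=
  fun i j => (if i = 0 ∨ i = k then (1:ℝ) else 0) * q j

lemma octaM_app (k : Fin 4) (q : Fin 4 → ℝ) (i j : Fin 4) :
  octaM k q i j = (if i = 0 ∨ i = k then (1:ℝ) else 0) * q j := rfl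

lemma top_InC {N : M44} (H : Hyp N) (P : Top N) : InC N := by
  obtain ⟨q, q0, q1, qr, qc⟩ := flow (fun (k : Fin 3) (j : Fin 4) => cp N k.succ j)
    (fun k => rh N k.succ) (kp N) (fun k j => F_cp H P _ _)
    (by
      rw [Fin.sum_univ_three, Fin.sum_univ_four]
      exact F_sr.trans F_sk.symm) (by
      intro I
      rcases fin3sets I with h | h | h | h | h | h | h | h <;> subst h
      · simp only [Finset.sum_empty]
        exact Finset.sum_nonneg fun j _ => le_min le_rfl (F_kp P j)
      · simp only [Finset.sum_singleton]; exact cutA H P _ (by decide)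
      · simp only [Finset.sum_singleton]; exact cutA H P _ (by decide)
      · simp only [Finset.sum_singleton]; exact cutA H P _ (by decide)
      · have e : ∀ f : Fin 3 → ℝ, ∑ k ∈ ({0, 1} : Finset (Fin 3)), f k = f 0 + f 1 :=
          fun f => Finset.sum_pair (by decide)
        simp only [e]; exact cutC H P
      · have e : ∀ f : Fin 3 → ℝ, ∑ k ∈ ({0, 2} : Finset (Fin 3)), f k = f 0 + f 2 :=
          fun f => Finset.sum_pair (by decide)
        simp only [e]
        exact cutC' H P (Equiv.swap 2 3) (by decide) _ _ (by decide) (by decide)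
      · have e : ∀ f : Fin 3 → ℝ, ∑ k ∈ ({1, 2} : Finset (Fin 3)), f k = f 1 + f 2 :=
          fun f => Finset.sum_pair (by decide)
        simp only [e]
        exact cutC' H P ((Equiv.swap 1 2).trans (Equiv.swap 1 3)) (by decide) _ _
          (by decide) (by decide)
      · simp only [Fin.sum_univ_three]
        have : ∀ j, min (cp N (Fin.succ 0) j + cp N (Fin.succ 1) j + cp N (Fin.succ 2) j) (kp N j)
            = kp N j := fun j => min_eq_right (cutB H P j)
        simp only [this, Fin.sum_univ_four]
        exact (F_sr.trans F_sk.symm).le)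
  have qb : ∀ k j, q k j ≤ (∑ l, q k l) / 2 := by
    intro k j
    rw [qr]
    exact (q1 k j).trans (min_le_right _ _)
  have o1 : InC (octaM 1 (q 0)) := InC.octa 1 (by decide) (q 0) (q0 0) (qb 0)
  have o2 : InC (octaM 2 (q 1)) := InC.octa 2 (by decide) (q 1) (q0 1) (qb 1)
  have o3 : InC (octaM 3 (q 2)) := InC.octa 3 (by decide) (q 2) (q0 2) (qb 2)
  have qn : ∀ k j, q k j ≤ N k.succ j := fun k j => (q1 k j).trans (min_le_left _ _)
  have qr0 : q 0 0 + q 0 1 + q 0 2 + q 0 3 = rh N 1 := by rw [← Fin.sum_univ_four]; exact qr 0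
  have qr1 : q 1 0 + q 1 1 + q 1 2 + q 1 3 = rh N 2 := by rw [← Fin.sum_univ_four]; exact qr 1
  have qr2 : q 2 0 + q 2 1 + q 2 2 + q 2 3 = rh N 3 := by rw [← Fin.sum_univ_four]; exact qr 2
  have qc' : ∀ j, q 0 j + q 1 j + q 2 j = kp N j := by
    intro j; rw [← Fin.sum_univ_three (fun k => q k j)]; exact qc j
  have hM : InC (N - octaM 1 (q 0) - octaM 2 (q 1) - octaM 3 (q 2)) := by
    refine InC.ds (h := hh N) ?_ ?_ ?_
    · intro i j
      have a := qc' j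
      have b := F_D H j
      have c0 := qn 0 j
      have c1 := qn 1 j
      have c2 := qn 2 j
      simp only [Matrix.sub_apply, octaM_app]
      fin_cases i
      · simp; linarith
      · simpa using c0
      · simpa using c1
      · simpa using c2
    · intro i
      simp only [Matrix.sub_apply, octaM_app, Fin.sum_univ_four]
      have a0 := qc' 0
      have a1 := qc' 1
      have a2 := qc' 2
      have a3 := qc' 3
      have s := F_sk (N := N)
      have r0 : N 0 0 + N 0 1 + N 0 2 + N 0 3 = rs N 0 := by rw [rs, Fin.sum_univ_four]
      have r1 := F_rs (N := N) 1
      have r2 := F_rs (N := N) 2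
      have r3 := F_rs (N := N) 3
      fin_cases i <;> simp <;> linarith
    · intro j
      simp only [Matrix.sub_apply, octaM_app, Fin.sum_univ_four]
      have a := qc' j
      have b := F_cs (N := N) j
      simp; linarith
  have := ((hM.add o1).add o2).add o3
  have e : N = N - octaM 1 (q 0) - octaM 2 (q 1) - octaM 3 (q 2) + octaM 1 (q 0) + octaM 2 (q 1)
      + octaM 3 (q 2) := by abel
  rw [e]; exact this

lemma rs_tr (N : M44) (i) : rs (tr N) i = cs N i := rfl
lemma cs_tr (N : M44) (i) : cs (tr N) i = rs N i := rfl

lemma row_InC {N : M44} (H : Hyp N) (a : Fin 4) (h1 : ∀ i, rs N i ≤ rs N a)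
    (h2 : ∀ i, tot N / 2 - rs N i ≤ rs N a) (h3 : ∀ i, cs N i ≤ rs N a)
    (h4 : ∀ i, tot N / 2 - cs N i ≤ rs N a) : InC N := by
  have := (top_InC (H.pm (Equiv.swap 0 a) 1) (by
    refine ⟨fun i => ?_, fun i => ?_, fun i => ?_, fun i => ?_⟩ <;>
      simp only [rs_pm, cs_pm, tot_pm, Equiv.swap_apply_left]
    · exact h1 _
    · exact h2 _
    · exact h3 _
    · exact h4 _)).pm (Equiv.swap 0 a) 1
  have e : pm (Equiv.swap 0 a) 1 (pm (Equiv.swap 0 a) 1 N) = N := by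
    funext i j; simp [pm]
  rwa [e] at this

lemma row_InC' {N : M44} (H : Hyp N) (a : Fin 4) (h1 : ∀ i, rs N i ≤ rs N a)
    (h2 : ∀ i, tot N / 2 - rs N i ≤ rs N a) (h3 : ∀ i, cs N i ≤ rs N a)
    (h4 : ∀ i, tot N / 2 - cs N i ≤ rs N a) : InC N := row_InC H a h1 h2 h3 h4

lemma row_InC2 {N : M44} (H : Hyp N) (a : Fin 4) (h1 : ∀ i, rs N i ≤ tot N / 2 - rs N a)
    (h2 : ∀ i, tot N / 2 - rs N i ≤ tot N / 2 - rs N a) (h3 : ∀ i, cs N i ≤ tot N / 2 - rs N a)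
    (h4 : ∀ i, tot N / 2 - cs N i ≤ tot N / 2 - rs N a) : InC N := by
  have := (row_InC H.pt a (by simpa only [rs_pt] using h2)
    (fun i => by simp only [rs_pt, tot_pt]; linarith [h1 i])
    (by simpa only [rs_pt, cs_pt] using h4)
    (fun i => by simp only [rs_pt, cs_pt, tot_pt]; linarith [h3 i])).pt
  rwa [pt_pt] at this

lemma hyp_InC {N : M44} (H : Hyp N) : InC N := by
  obtain ⟨a, ha⟩ := Finite.exists_max (rs N)
  obtain ⟨b, hb⟩ := Finite.exists_max (fun i => tot N / 2 - rs N i)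
  obtain ⟨c, hc⟩ := Finite.exists_max (cs N)
  obtain ⟨d, hd⟩ := Finite.exists_max (fun i => tot N / 2 - cs N i)
  have T : InC (tr N) → InC N := fun h => h.tr
  by_cases h1 : (tot N / 2 - rs N b ≤ rs N a ∧ cs N c ≤ rs N a ∧ tot N / 2 - cs N d ≤ rs N a)
  · exact row_InC H a ha (fun i => (hb i).trans h1.1) (fun i => (hc i).trans h1.2.1)
      (fun i => (hd i).trans h1.2.2)
  by_cases h2 : (rs N a ≤ tot N / 2 - rs N b ∧ cs N c ≤ tot N / 2 - rs N b ∧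
      tot N / 2 - cs N d ≤ tot N / 2 - rs N b)
  · exact row_InC2 H b (fun i => (ha i).trans h2.1) hb (fun i => (hc i).trans h2.2.1)
      (fun i => (hd i).trans h2.2.2)
  by_cases h3 : (rs N a ≤ cs N c ∧ tot N / 2 - rs N b ≤ cs N c ∧ tot N / 2 - cs N d ≤ cs N c)
  · refine T (row_InC H.tr c ?_ ?_ ?_ ?_) <;> simp only [rs_tr, cs_tr, tot_tr]
    · exact hc
    · exact (fun i => (hd i).trans h3.2.2)
    · exact (fun i => (ha i).trans h3.1)
    · exact (fun i => (hb i).trans h3.2.1)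
  have h4 : rs N a ≤ tot N / 2 - cs N d ∧ tot N / 2 - rs N b ≤ tot N / 2 - cs N d ∧
      cs N c ≤ tot N / 2 - cs N d := by
    generalize tot N / 2 - rs N b = B at *
    generalize tot N / 2 - cs N d = D at *
    generalize rs N a = A at *
    generalize cs N c = C at *
    clear ha hb hc hd T H
    grind
  refine T (row_InC2 H.tr d ?_ ?_ ?_ ?_) <;> simp only [rs_tr, cs_tr, tot_tr]
  · exact (fun i => (hc i).trans h4.2.2)
  · exact hd
  · exact (fun i => (ha i).trans h4.1)
  · exact (fun i => (hb i).trans h4.2.1)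

lemma tot_Ps : ∀ z ∈ Ps, tot z = 1 := by
  intro z hz
  have hc : Convex ℝ {z : M44 | tot z = 1} := by
    intro x hx y hy a b _ _ hab
    change tot _ = 1
    have : tot (a • x + b • y) = a * tot x + b * tot y := by
      simp only [tot, Matrix.add_apply, Matrix.smul_apply, smul_eq_mul, Finset.sum_add_distrib,
        ← Finset.mul_sum]
    rw [this, show tot x = 1 from hx, show tot y = 1 from hy]; linarith
  refine convexHull_min ?_ hc hz
  rintro g ⟨s, t, rfl | rfl⟩
  · change ∑ i, ∑ j, D0 (s i) (t j) = 1
    simp only [sumD_row]; simp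
  · change ∑ i, ∑ j, G0 (s i) (t j) = 1
    simp only [G0_app, ← Finset.mul_sum, sumI, mul_one]

lemma hyp_Ps {N : M44} (H : Hyp N) (h : tot N = 1) : N ∈ Ps := by
  obtain ⟨c, -, z, hz, rfl⟩ := hyp_InC H
  have : tot (c • z) = c * tot z := by
    simp only [tot, Matrix.smul_apply, smul_eq_mul, ← Finset.mul_sum]
  rw [this, tot_Ps z hz, mul_one] at h
  rw [h, one_smul]; exact hz


/-- real "Pauli" matrices -/
def PP : Fin 4 → Fin 2 → Fin 2 → ℝ :=
  ![![![1,0],![0,1]], ![![1,0],![0,-1]], ![![0,1],![1,0]], ![![0,1],![-1,0]]]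

def SS (k l : Fin 4) (x : Q2 → ℂ) : ℂ :=
  ∑ p : Q2 × Q2, ((PP k p.1.1 p.2.1 * PP l p.1.2 p.2.2 : ℝ) : ℂ) * (x p.1 * star (x p.2))

def nq (k l : Fin 4) (x : Q2 → ℂ) : ℝ := Complex.normSq (SS k l x)
def nn0 (x : Q2 → ℂ) : ℝ := ∑ p, Complex.normSq (x p)

lemma nn0_nonneg (x) : 0 ≤ nn0 x := Finset.sum_nonneg fun p _ => Complex.normSq_nonneg _

lemma SS00 (x) : SS 0 0 x = (nn0 x : ℂ) := by
  simp only [SS, nn0, Fintype.sum_prod_type, Fin.sum_univ_two, PP]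
  simp [Complex.mul_conj]

lemma nq_R1 (x) : nq 2 0 x + nq 3 0 x + nq 1 1 x + nq 1 2 x + nq 1 3 x = nn0 x ^ 2 := by
  simp only [nq, SS, nn0, Fintype.sum_prod_type, Fin.sum_univ_two, PP]
  simp [Complex.normSq_apply]
  ring
lemma nq_R2 (x) : nq 1 0 x + nq 3 0 x + nq 2 1 x + nq 2 2 x + nq 2 3 x = nn0 x ^ 2 := by
  simp only [nq, SS, nn0, Fintype.sum_prod_type, Fin.sum_univ_two, PP]
  simp [Complex.normSq_apply]
  ring
lemma nq_R3 (x) : nq 1 0 x + nq 2 0 x + nq 3 1 x + nq 3 2 x + nq 3 3 x = nn0 x ^ 2 := by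
  simp only [nq, SS, nn0, Fintype.sum_prod_type, Fin.sum_univ_two, PP]
  simp [Complex.normSq_apply]
  ring
lemma nq_A (x) : nq 1 0 x + nq 2 0 x + nq 3 0 x = nq 0 1 x + nq 0 2 x + nq 0 3 x := by
  simp only [nq, SS, nn0, Fintype.sum_prod_type, Fin.sum_univ_two, PP]
  simp [Complex.normSq_apply]
  ring

def xsw (x : Q2 → ℂ) : Q2 → ℂ := fun p => x (p.2, p.1)

lemma nn0_sw (x) : nn0 (xsw x) = nn0 x := by
  simp only [nn0, xsw, Fintype.sum_prod_type, Fin.sum_univ_two]; ring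

lemma nq_sw (k l : Fin 4) (x) : nq k l (xsw x) = nq l k x := by
  unfold nq SS xsw
  congr 1
  refine Fintype.sum_equiv ((Equiv.prodComm _ _).prodCongr (Equiv.prodComm _ _)) _ _ fun p => ?_
  simp [mul_comm]
  left; rfl

lemma nq_C1 (x) : nq 0 2 x + nq 0 3 x + nq 1 1 x + nq 2 1 x + nq 3 1 x = nn0 x ^ 2 := by
  have := nq_R1 (xsw x); simpa only [nq_sw, nn0_sw] using this
lemma nq_C2 (x) : nq 0 1 x + nq 0 3 x + nq 1 2 x + nq 2 2 x + nq 3 2 x = nn0 x ^ 2 := by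
  have := nq_R2 (xsw x); simpa only [nq_sw, nn0_sw] using this
lemma nq_C3 (x) : nq 0 1 x + nq 0 2 x + nq 1 3 x + nq 2 3 x + nq 3 3 x = nn0 x ^ 2 := by
  have := nq_R3 (xsw x); simpa only [nq_sw, nn0_sw] using this


def SepId (r : Matrix (Fin 4) (Fin 4) ℝ) (n : ℕ) (x y : Fin n → Q2 → ℂ) : Prop :=
  ∀ p1 q1 p2 q2 : Q2, ∑ i, ∑ j, (r i j : ℂ) * (BellProj i p1 q1 * BellProj j p2 q2)
    = ∑ m, (x m (p1.1, p2.1) * star (x m (q1.1, q2.1))) * (y m (p1.2, p2.2) * star (y m (q1.2, q2.2)))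

lemma sepId_of {r : Matrix (Fin 4) (Fin 4) ℝ}
    (hsep : SepAB (∑ i, ∑ j, (r i j : ℂ) • (BellProj i ⊗ₖ BellProj j))) :
    ∃ (n : ℕ) (x y : Fin n → Q2 → ℂ), SepId r n x y := by
  obtain ⟨n, x, y, h⟩ := hsep
  refine ⟨n, x, y, fun p1 q1 p2 q2 => ?_⟩
  have := congrFun (congrFun h ((p1.1, p2.1), (p1.2, p2.2))) ((q1.1, q2.1), (q1.2, q2.2))
  simpa [Matrix.sum_apply, Matrix.smul_apply, Matrix.kroneckerMap_apply, swapMid, pureMat,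
    vecMulVec_apply] using this

lemma key {r : Matrix (Fin 4) (Fin 4) ℝ} {n : ℕ} {x y : Fin n → Q2 → ℂ} (h : SepId r n x y)
    (F G : Q2 × Q2 → ℂ) :
    ∑ i, ∑ j, (r i j : ℂ) * ((∑ u, F u * BellProj i u.1 u.2) * (∑ v, G v * BellProj j v.1 v.2))
    = ∑ m, ∑ w : (Q2 × Q2) × (Q2 × Q2), F w.1 * G w.2 *
      ((x m (w.1.1.1, w.2.1.1) * star (x m (w.1.2.1, w.2.2.1))) *
       (y m (w.1.1.2, w.2.1.2) * star (y m (w.1.2.2, w.2.2.2)))) := by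
  have h1 : ∀ i j, (r i j : ℂ) * ((∑ u, F u * BellProj i u.1 u.2) * (∑ v, G v * BellProj j v.1 v.2))
      = ∑ w : (Q2 × Q2) × (Q2 × Q2), F w.1 * G w.2 *
        ((r i j : ℂ) * (BellProj i w.1.1 w.1.2 * BellProj j w.2.1 w.2.2)) := by
    intro i j
    rw [Fintype.sum_mul_sum, ← Fintype.sum_prod_type', Finset.mul_sum]
    refine Finset.sum_congr rfl fun w _ => ?_
    ring
  simp only [h1]
  have h2 : ∀ i, ∑ j, ∑ w : (Q2 × Q2) × (Q2 × Q2), F w.1 * G w.2 *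
        ((r i j : ℂ) * (BellProj i w.1.1 w.1.2 * BellProj j w.2.1 w.2.2)) =
        ∑ w : (Q2 × Q2) × (Q2 × Q2), ∑ j, F w.1 * G w.2 *
        ((r i j : ℂ) * (BellProj i w.1.1 w.1.2 * BellProj j w.2.1 w.2.2)) := fun i => Finset.sum_comm
  simp only [h2]
  refine (Finset.sum_comm).trans (Eq.trans ?_ Finset.sum_comm)
  refine Finset.sum_congr rfl fun w _ => ?_
  rw [← Finset.mul_sum, ← h, Finset.mul_sum]
  exact Finset.sum_congr rfl fun i _ => (Finset.mul_sum _ _ _).symm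

lemma inv2 : invSqrt2 * invSqrt2 = 1/2 := by
  unfold invSqrt2
  rw [← Complex.ofReal_mul, ← mul_inv, Real.mul_self_sqrt (by norm_num)]
  norm_num

lemma inv2s : (starRingEnd ℂ) invSqrt2 = invSqrt2 := by
  unfold invSqrt2; exact Complex.conj_ofReal _

lemma bell_star (i p) : star (bell i p) = bell i p := by
  obtain ⟨a, b⟩ := p
  fin_cases i <;> fin_cases a <;> fin_cases b <;> simp [bell, inv2s]

lemma BP (i : Fin 4) (p q : Q2) : BellProj i p q = bell i p * bell i q := by
  simp only [BellProj, vecMulVec_apply, Pi.star_apply, bell_star]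

def KK (k : Fin 4) (u : Q2 × Q2) : ℂ := ((PP k u.1.1 u.2.1 * PP k u.1.2 u.2.2 : ℝ) : ℂ)
def QQ (i : Fin 4) (u : Q2 × Q2) : ℂ := bell i (u.1.1, u.2.2) * bell i (u.2.1, u.1.2)

lemma KK_sum (k i : Fin 4) : ∑ u, KK k u * BellProj i u.1 u.2 = (chi k i : ℂ) := by
  simp only [BP, KK, Fintype.sum_prod_type, Fin.sum_univ_two]
  fin_cases k <;> fin_cases i <;> simp [PP, bell, chi, chiZ, inv2] <;> norm_num

lemma QQ_sum (i m : Fin 4) : ∑ u, QQ i u * BellProj m u.1 u.2 =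
    (((1:ℝ)/2 - if m = Fin.rev i then 1 else 0 : ℝ) : ℂ) := by
  have h := inv2
  have h4 : invSqrt2 ^ 4 = 1/4 := by
    rw [show invSqrt2 ^ 4 = (invSqrt2 * invSqrt2) * (invSqrt2 * invSqrt2) by ring, h]; norm_num
  simp only [BP, QQ, Fintype.sum_prod_type, Fin.sum_univ_two]
  fin_cases i <;> fin_cases m <;> simp [bell, Fin.rev, Fin.ext_iff] <;> ring_nf <;> simp only [h4] <;> norm_num

def eqA : (Q2 × Q2) × (Q2 × Q2) ≃ (Q2 × Q2) × (Q2 × Q2) where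
  toFun w := (((w.1.1.1, w.2.1.1), (w.1.2.1, w.2.2.1)), ((w.1.1.2, w.2.1.2), (w.1.2.2, w.2.2.2)))
  invFun w := (((w.1.1.1, w.2.1.1), (w.1.2.1, w.2.2.1)), ((w.1.1.2, w.2.1.2), (w.1.2.2, w.2.2.2)))
  left_inv _ := rfl
  right_inv _ := rfl

-- ((a,b),(c,d)),((a',b'),(c',d')) ↦ ((a,a'),(d,d')),((c,c'),(b,b'))
def eqB : (Q2 × Q2) × (Q2 × Q2) ≃ (Q2 × Q2) × (Q2 × Q2) where
  toFun w := (((w.1.1.1, w.2.1.1), (w.1.2.2, w.2.2.2)), ((w.1.2.1, w.2.2.1), (w.1.1.2, w.2.1.2)))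
  invFun w := (((w.1.1.1, w.2.2.1), (w.2.1.1, w.1.2.1)), ((w.1.1.2, w.2.2.2), (w.2.1.2, w.1.2.2)))
  left_inv _ := rfl
  right_inv _ := rfl

lemma four_eq {r : Matrix (Fin 4) (Fin 4) ℝ} {n : ℕ} {x y : Fin n → Q2 → ℂ} (h : SepId r n x y)
    (k l : Fin 4) : (four r k l : ℂ) = ∑ m, SS k l (x m) * SS k l (y m) := by
  have := key h (KK k) (KK l)
  simp only [KK_sum] at this
  calc (four r k l : ℂ) = ∑ i, ∑ j, (r i j : ℂ) * ((chi k i : ℂ) * (chi l j : ℂ)) := by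
        simp only [four, Complex.ofReal_sum, Complex.ofReal_mul]
        exact Finset.sum_congr rfl fun i _ => Finset.sum_congr rfl fun j _ => by ring
    _ = _ := this
    _ = _ := by
        refine Finset.sum_congr rfl fun m _ => ?_
        rw [SS, SS, Fintype.sum_mul_sum, ← Fintype.sum_prod_type']
        refine Fintype.sum_equiv eqA _ _ fun w => ?_
        simp only [eqA, KK, Equiv.coe_fn_mk]
        push_cast
        ring

lemma pt_nonneg {r : Matrix (Fin 4) (Fin 4) ℝ} {n : ℕ} {x y : Fin n → Q2 → ℂ} (h : SepId r n x y)
    (i j : Fin 4) : 0 ≤ pt r i j := by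
  have := key h (QQ i.rev) (QQ j.rev)
  simp only [QQ_sum, Fin.rev_rev] at this
  have e1 : ((pt r i j : ℝ) : ℂ) = ∑ a, ∑ b, (r a b : ℂ) *
      ((((1:ℝ)/2 - if a = i then 1 else 0 : ℝ) : ℂ) * (((1:ℝ)/2 - if b = j then 1 else 0 : ℝ) : ℂ)) := by
    rw [show pt r i j = ∑ a, ∑ b, r a b * (((1:ℝ)/2 - if a = i then 1 else 0) *
        ((1:ℝ)/2 - if b = j then 1 else 0)) from ?_]
    · push_cast; rfl
    · simp only [pt, tot, rs, cs, Fin.sum_univ_four]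
      fin_cases i <;> fin_cases j <;> simp <;> ring
  have e2 : ∀ m, ∑ w : (Q2 × Q2) × (Q2 × Q2), QQ i.rev w.1 * QQ j.rev w.2 *
      ((x m (w.1.1.1, w.2.1.1) * star (x m (w.1.2.1, w.2.2.1))) *
       (y m (w.1.1.2, w.2.1.2) * star (y m (w.1.2.2, w.2.2.2)))) =
      ((Complex.normSq (∑ s : Q2 × Q2, bell i.rev (s.1.1, s.2.1) * bell j.rev (s.1.2, s.2.2) *
        (x m s.1 * star (y m s.2))) : ℝ) : ℂ) := by
    intro m
    rw [Complex.normSq_eq_conj_mul_self, mul_comm]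
    rw [map_sum, Fintype.sum_mul_sum, ← Fintype.sum_prod_type']
    refine Fintype.sum_equiv eqB _ _ fun w => ?_
    have hb : ∀ i p, (starRingEnd ℂ) (bell i p) = bell i p := bell_star
    simp only [eqB, QQ, Equiv.coe_fn_mk, map_mul, hb, starRingEnd_apply, star_star]
    ring
  rw [← e1] at this
  simp only [e2] at this
  rw [← Complex.ofReal_sum] at this
  rw [Complex.ofReal_injective this]
  exact Finset.sum_nonneg fun m _ => Complex.normSq_nonneg _

lemma tot_eq {r : Matrix (Fin 4) (Fin 4) ℝ} {n : ℕ} {x y : Fin n → Q2 → ℂ} (h : SepId r n x y) :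
    tot r = ∑ m, nn0 (x m) * nn0 (y m) := by
  have := four_eq h 0 0
  simp only [SS00] at this
  have e : four r 0 0 = tot r := by simp [four, tot, chi, chiZ, Fin.sum_univ_four]
  rw [e] at this
  exact_mod_cast this

lemma main_T {r : Matrix (Fin 4) (Fin 4) ℝ} {n : ℕ} {x y : Fin n → Q2 → ℂ} (h : SepId r n x y)
    {q : ℕ} (T : Fin q → Fin 4 × Fin 4) (c : ℝ) (hc : 0 ≤ c)
    (hT : ∀ x, ∑ i, nq (T i).1 (T i).2 x = c * nn0 x ^ 2) :
    ∑ i, DD r (T i).1 (T i).2 ≤ c * tot r := by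
  have h1 : ∀ k l, DD r k l ≤ ∑ m, ‖SS k l (x m)‖ * ‖SS k l (y m)‖ := by
    intro k l
    have : DD r k l = ‖(four r k l : ℂ)‖ := by simp [DD]
    rw [this, four_eq h]
    refine (norm_sum_le _ _).trans (le_of_eq ?_)
    simp
  refine (Finset.sum_le_sum fun i _ => h1 _ _).trans ?_
  rw [Finset.sum_comm, tot_eq h, Finset.mul_sum]
  refine Finset.sum_le_sum fun m _ => ?_
  have cs := Finset.sum_mul_sq_le_sq_mul_sq Finset.univ
    (fun i => ‖SS (T i).1 (T i).2 (x m)‖) (fun i => ‖SS (T i).1 (T i).2 (y m)‖)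
  have e : ∀ z, ∑ i, ‖SS (T i).1 (T i).2 z‖ ^ 2 = c * nn0 z ^ 2 := by
    intro z; rw [← hT z]
    exact Finset.sum_congr rfl fun i _ => by rw [nq, Complex.normSq_eq_norm_sq]
  rw [e, e] at cs
  refine abs_le_of_sq_le_sq' (a := _) ?_ ?_ |>.2
  · nlinarith
  · exact mul_nonneg hc (mul_nonneg (nn0_nonneg _) (nn0_nonneg _))

lemma hyp_of_sep {r : Matrix (Fin 4) (Fin 4) ℝ} {n : ℕ} {x y : Fin n → Q2 → ℂ}
    (h : SepId r n x y) (hpos : ∀ i j, 0 ≤ r i j) : Hyp r := by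
  have e : four r 0 0 = tot r := by simp [four, tot, chi, chiZ, Fin.sum_univ_four]
  have t0 : 0 ≤ tot r := Finset.sum_nonneg fun i _ => Finset.sum_nonneg fun j _ => hpos i j
  have e0 : DD r 0 0 = tot r := by rw [DD, e, abs_of_nonneg t0]
  have R1 := main_T h ![(2,0),(3,0),(1,1),(1,2),(1,3)] 1 zero_le_one
    (fun x => by simp [Fin.sum_univ_succ]; linarith [nq_R1 x])
  have R2 := main_T h ![(1,0),(3,0),(2,1),(2,2),(2,3)] 1 zero_le_one
    (fun x => by simp [Fin.sum_univ_succ]; linarith [nq_R2 x])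
  have R3 := main_T h ![(1,0),(2,0),(3,1),(3,2),(3,3)] 1 zero_le_one
    (fun x => by simp [Fin.sum_univ_succ]; linarith [nq_R3 x])
  have C1 := main_T h ![(0,2),(0,3),(1,1),(2,1),(3,1)] 1 zero_le_one
    (fun x => by simp [Fin.sum_univ_succ]; linarith [nq_C1 x])
  have C2 := main_T h ![(0,1),(0,3),(1,2),(2,2),(3,2)] 1 zero_le_one
    (fun x => by simp [Fin.sum_univ_succ]; linarith [nq_C2 x])
  have C3 := main_T h ![(0,1),(0,2),(1,3),(2,3),(3,3)] 1 zero_le_one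
    (fun x => by simp [Fin.sum_univ_succ]; linarith [nq_C3 x])
  have A1 := main_T h ![(0,1),(1,0),(2,0),(3,0),(1,2),(2,2),(3,2),(1,3),(2,3),(3,3)] 2 zero_le_two
    (fun x => by
      simp [Fin.sum_univ_succ]
      linarith [nq_R1 x, nq_R2 x, nq_R3 x, nq_C1 x, nq_C2 x, nq_C3 x, nq_A x])
  have A2 := main_T h ![(0,2),(1,0),(2,0),(3,0),(1,1),(2,1),(3,1),(1,3),(2,3),(3,3)] 2 zero_le_two
    (fun x => by
      simp [Fin.sum_univ_succ]
      linarith [nq_R1 x, nq_R2 x, nq_R3 x, nq_C1 x, nq_C2 x, nq_C3 x, nq_A x])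
  have A3 := main_T h ![(0,3),(1,0),(2,0),(3,0),(1,2),(2,2),(3,2),(1,1),(2,1),(3,1)] 2 zero_le_two
    (fun x => by
      simp [Fin.sum_univ_succ]
      linarith [nq_R1 x, nq_R2 x, nq_R3 x, nq_C1 x, nq_C2 x, nq_C3 x, nq_A x])
  have B1 := main_T h ![(1,0),(0,1),(0,2),(0,3),(2,1),(2,2),(2,3),(3,1),(3,2),(3,3)] 2 zero_le_two
    (fun x => by
      simp [Fin.sum_univ_succ]
      linarith [nq_R1 x, nq_R2 x, nq_R3 x, nq_C1 x, nq_C2 x, nq_C3 x, nq_A x])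
  have B2 := main_T h ![(2,0),(0,1),(0,2),(0,3),(1,1),(1,2),(1,3),(3,1),(3,2),(3,3)] 2 zero_le_two
    (fun x => by
      simp [Fin.sum_univ_succ]
      linarith [nq_R1 x, nq_R2 x, nq_R3 x, nq_C1 x, nq_C2 x, nq_C3 x, nq_A x])
  have B3 := main_T h ![(3,0),(0,1),(0,2),(0,3),(2,1),(2,2),(2,3),(1,1),(1,2),(1,3)] 2 zero_le_two
    (fun x => by
      simp [Fin.sum_univ_succ]
      linarith [nq_R1 x, nq_R2 x, nq_R3 x, nq_C1 x, nq_C2 x, nq_C3 x, nq_A x])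
  simp [Fin.sum_univ_succ] at R1 R2 R3 C1 C2 C3 A1 A2 A3 B1 B2 B3
  refine ⟨hpos, pt_nonneg h, ?_, ?_, ?_, ?_⟩
  all_goals
    intro k hk
    fin_cases k
    · exact absurd rfl hk
    all_goals
      simp only [Fin.sum_univ_four, e0, Fin.zero_eta, Fin.mk_one, Fin.reduceFinMk]
      linarith

/-- if `r` has nonnegative entries summing to `1` and
`ρ = Σ_{ij} r_{ij} Π_i⊗Π_j` is separable across the partition A = (A',A''),
B = (B',B''), then `r ∈ 𝒫_s`. -/
theorem stmt10 (r : Matrix (Fin 4) (Fin 4) ℝ)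
    (hpos : ∀ i j, 0 ≤ r i j) (hsum : ∑ i, ∑ j, r i j = 1)
    (hsep : SepAB (∑ i, ∑ j, (r i j : ℂ) • (BellProj i ⊗ₖ BellProj j))) :
    r ∈ Ps := by
  obtain ⟨n, x, y, h⟩ := sepId_of hsep
  exact hyp_Ps (hyp_of_sep h hpos) hsum

end Paper
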